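/- arXiv:1109.2939 — 2 statements merged into one kernel-verified Lean document; each statement's English description precedes it below -/
import Mathlib

section
/- Let L be an r×m integer matrix of full rank r, let p be a sufficiently large prime, and let A_1, …, A_m be p-measurable subsets of T = ℝ/ℤ. Then there exist elements j_1/p, …, j_K/p ∈ J(L,p), with K ≤ K_L a bound depending only on L, such that S_{L,T}(A_1, …, A_m) = Σ_{k=1}^{K} λ_k · S_{L,ℤ_p}(A_1' − j_k(1), …, A_m' − j_k(m)), where λ_k = p^{m−r} μ_{L,T}((j_k/p + [0,1/p)^m) ∩ ker_T L). -/
open MeasureTheory Set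

noncomputable section

/-- The circle group `𝕋 = ℝ/ℤ`. -/
abbrev 𝕋 : Type := AddCircle (1 : ℝ)

/-- The group homomorphism `x ↦ Lx` induced by an integer matrix `L`. -/
def Lhom {r m : ℕ} (L : Matrix (Fin r) (Fin m) ℤ) (G : Type*) [AddCommGroup G] :
    (Fin m → G) →+ (Fin r → G) where
  toFun x := fun i => ∑ j, L i j • x j
  map_zero' := by ext i; simp
  map_add' x y := by ext i; simp [smul_add, Finset.sum_add_distrib]

/-- `ker_𝕋 L`, the closed subgroup `{x ∈ 𝕋^m : Lx = 0}` of `𝕋^m`. -/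
def kerT {r m : ℕ} (L : Matrix (Fin r) (Fin m) ℤ) : AddSubgroup (Fin m → 𝕋) :=
  (Lhom L 𝕋).ker

/-- `ker_{ℤ_p} L = {j ∈ ℤ_p^m : Lj = 0}`. -/
def kerZ {r m : ℕ} (L : Matrix (Fin r) (Fin m) ℤ) (p : ℕ) : AddSubgroup (Fin m → ZMod p) :=
  (Lhom L (ZMod p)).ker

/-- The point `j/p = (j(1)/p, …, j(m)/p)` of `𝕋^m`. -/
def discPt (m p : ℕ) (j : Fin m → ℤ) : Fin m → 𝕋 :=
  fun i => (((j i : ℝ) / p : ℝ) : 𝕋)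

/-- The discrete torus `Λ(p) = ℤ_p^m / p ≤ 𝕋^m`, as a set. -/
def ΛSet (m p : ℕ) : Set (Fin m → 𝕋) :=
  {y | ∃ j : Fin m → ℤ, y = discPt m p j}

/-- The cube `[0, 1/p)^m ⊆ 𝕋^m`. -/
def cube0 (m p : ℕ) : Set (Fin m → 𝕋) :=
  Set.pi Set.univ fun _ : Fin m => (fun t : ℝ => (t : 𝕋)) '' Set.Ico (0 : ℝ) (1 / p)

/-- `J(L,p)`: the points `j/p ∈ Λ(p)` with `μ_L((j/p + [0,1/p)^m) ∩ ker_𝕋 L) > 0`. -/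
def Jset {r m : ℕ} (L : Matrix (Fin r) (Fin m) ℤ) (p : ℕ) (μL : Measure (kerT L)) :
    Set (Fin m → 𝕋) :=
  {y ∈ ΛSet m p | 0 < μL {x : kerT L | (x : Fin m → 𝕋) - y ∈ cube0 m p}}

/-- `A ⊆ 𝕋` is `p`-measurable if it is a union of intervals `[(k-1)/p, k/p)` from the
`p`-partition of `𝕋`. -/
def PMeasurable (p : ℕ) (A : Set 𝕋) : Prop :=
  ∃ s : Finset (Fin p),
    A = ⋃ k ∈ s, (fun t : ℝ => (t : 𝕋)) '' Set.Ico ((k : ℝ) / p) (((k : ℝ) + 1) / p)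

/-- For `p`-measurable `A ⊆ 𝕋`, the set `A' ⊆ ℤ_p` defined by `1_{A'}(x) = 1_A(x/p)`. -/
def discretize (p : ℕ) (A : Set 𝕋) : Set (ZMod p) :=
  {k : ZMod p | (((k.val : ℝ) / p : ℝ) : 𝕋) ∈ A}

/-- `S_{L,ℤ_p}(B₁, …, B_m)`: the proportion of `x ∈ ker_{ℤ_p} L` with `x_i ∈ B_i`
for all `i`. -/
def SZ {r m : ℕ} (L : Matrix (Fin r) (Fin m) ℤ) (p : ℕ) (B : Fin m → Set (ZMod p)) : ℝ :=
  (Nat.card {x : ↥(kerZ L p) // ∀ i, (x : Fin m → ZMod p) i ∈ B i} : ℝ) /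
    (Nat.card ↥(kerZ L p) : ℝ)

/-- The weight `λ(j) = p^{m-r} μ_{L,𝕋}((j/p + [0,1/p)^m) ∩ ker_𝕋 L)`. -/
def lamVal {r m : ℕ} (L : Matrix (Fin r) (Fin m) ℤ) (p : ℕ) (μL : Measure (kerT L))
    (j : Fin m → ℤ) : ℝ :=
  (p : ℝ) ^ (m - r) * (μL {x : kerT L | (x : Fin m → 𝕋) - discPt m p j ∈ cube0 m p}).toReal

/-- index of the `p`-cell containing `x` -/
def cell (p : ℕ) (x : 𝕋) : ZMod p := ((⌊(p : ℝ) * (Quotient.out x : ℝ)⌋ : ℤ) : ZMod p)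

lemma out_coe (x : 𝕋) : ((Quotient.out x : ℝ) : 𝕋) = x := Quotient.out_eq x

lemma cell_coe (p : ℕ) (t : ℝ) : cell p (t : 𝕋) = ((⌊(p : ℝ) * t⌋ : ℤ) : ZMod p) := by
  unfold cell
  have h : ((Quotient.out (t : 𝕋) : ℝ) : 𝕋) = (t : 𝕋) := out_coe _
  generalize (Quotient.out (t : 𝕋) : ℝ) = s at h
  have h2 : ((s - t : ℝ) : 𝕋) = 0 := by
    rw [AddCircle.coe_sub, h, sub_self]
  obtain ⟨n, hn⟩ := (AddCircle.coe_eq_zero_iff (1 : ℝ)).1 h2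
  have hs : s = t + n := by
    simp at hn; linarith
  have : (p : ℝ) * s = p * t + ((p * n : ℤ) : ℝ) := by
    rw [hs]; push_cast; ring
  rw [this, Int.floor_add_intCast]
  push_cast
  simp

lemma cell_add (p : ℕ) (hp : 0 < p) (x : 𝕋) (k : ℤ) :
    cell p (x + (((k : ℝ) / p : ℝ) : 𝕋)) = cell p x + k := by
  have hp' : (p : ℝ) ≠ 0 := by positivity
  rw [← out_coe x]
  generalize (Quotient.out x : ℝ) = t
  rw [← AddCircle.coe_add, cell_coe, cell_coe]
  have : (p : ℝ) * (t + k / p) = p * t + (k : ℤ) := by field_simp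
  rw [this, Int.floor_add_intCast]
  push_cast
  rfl

lemma mem_I_iff (p : ℕ) (hp : 0 < p) (x : 𝕋) (k : ℤ) :
    x ∈ (fun t : ℝ => (t : 𝕋)) '' Set.Ico ((k : ℝ) / p) (((k : ℝ) + 1) / p) ↔
      cell p x = k := by
  have hp' : (0 : ℝ) < p := by positivity
  constructor
  · rintro ⟨t, ⟨h1, h2⟩, rfl⟩
    simp only
    rw [cell_coe]
    have : ⌊(p : ℝ) * t⌋ = k := by
      rw [Int.floor_eq_iff]
      rw [div_le_iff₀ hp'] at h1
      rw [lt_div_iff₀ hp'] at h2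
      constructor <;> linarith
    rw [this]
  · intro h
    rw [← out_coe x] at h ⊢
    generalize (Quotient.out x : ℝ) = t at h
    rw [cell_coe] at h
    have h3 := (ZMod.intCast_eq_intCast_iff_dvd_sub _ _ _).1 h
    obtain ⟨n, hn⟩ := h3
    have hn' : (k : ℝ) = ⌊(p : ℝ) * t⌋ + p * n := by
      have : k = ⌊(p : ℝ) * t⌋ + p * n := by linarith
      exact_mod_cast this
    refine ⟨t + n, ⟨?_, ?_⟩, ?_⟩
    · rw [div_le_iff₀ hp', hn']
      have := Int.floor_le ((p : ℝ) * t)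
      linarith
    · rw [lt_div_iff₀ hp', hn']
      have := Int.lt_floor_add_one ((p : ℝ) * t)
      linarith
    · simp only
      rw [AddCircle.coe_add]
      have : ((n : ℝ) : 𝕋) = 0 := (AddCircle.coe_eq_zero_iff (1 : ℝ)).2 ⟨n, by simp⟩
      rw [this, add_zero]

lemma mem_I0_iff (p : ℕ) (hp : 0 < p) (x : 𝕋) (k : ℤ) :
    x - (((k : ℝ) / p : ℝ) : 𝕋) ∈ (fun t : ℝ => (t : 𝕋)) '' Set.Ico (0 : ℝ) (1 / p) ↔
      cell p x = k := by
  have h := mem_I_iff p hp (x - (((k : ℝ) / p : ℝ) : 𝕋)) 0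
  simp only [Int.cast_zero, zero_div, zero_add] at h
  rw [h]
  have h2 := cell_add p hp x (-k)
  have h3 : x - (((k : ℝ) / p : ℝ) : 𝕋) = x + ((((-k : ℤ) : ℝ) / p : ℝ) : 𝕋) := by
    push_cast
    rw [neg_div, AddCircle.coe_neg, sub_eq_add_neg]
  rw [h3, h2]
  push_cast
  rw [← sub_eq_add_neg, sub_eq_zero]

lemma measurableSet_I (a b : ℝ) :
    MeasurableSet ((fun t : ℝ => (t : 𝕋)) '' Set.Ico a b) := by
  by_cases hab : a < b
  · rw [← Set.Ioo_union_left hab, Set.image_union, Set.image_singleton]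
    refine MeasurableSet.union ?_ (measurableSet_singleton _)
    exact (QuotientAddGroup.isOpenMap_coe _ isOpen_Ioo).measurableSet
  · rw [Set.Ico_eq_empty hab, Set.image_empty]; exact MeasurableSet.empty

lemma mem_A_iff (p : ℕ) (hp : 0 < p) (A : Set 𝕋) (hA : PMeasurable p A) (x : 𝕋) :
    x ∈ A ↔ cell p x ∈ discretize p A := by
  have : NeZero p := ⟨hp.ne'⟩
  obtain ⟨s, rfl⟩ := hA
  have key : ∀ y : 𝕋, (y ∈ ⋃ k ∈ s, (fun t : ℝ => (t : 𝕋)) ''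
      Set.Ico ((k : ℝ) / p) (((k : ℝ) + 1) / p)) ↔ ∃ k ∈ s, cell p y = ((k : ℕ) : ZMod p) := by
    intro y
    simp only [Set.mem_iUnion, exists_prop]
    refine exists_congr fun k => and_congr_right fun _ => ?_
    have := mem_I_iff p hp y ((k : ℕ) : ℤ)
    simpa using this
  unfold discretize
  rw [Set.mem_ofPred_eq, key, key]
  have : cell p ((((cell p x).val : ℝ) / p : ℝ) : 𝕋) = cell p x := by
    rw [cell_coe, mul_div_cancel₀ _ (by positivity : (p : ℝ) ≠ 0)]
    rw [Int.floor_natCast]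
    simp
  rw [this]

lemma exists_bound {r m : ℕ} (L : Matrix (Fin r) (Fin m) ℤ) (p : ℕ) (x : Fin m → 𝕋)
    (hx : x ∈ kerT L) (i : Fin r) :
    ∃ w : ℤ, |w| ≤ ∑ i, ∑ l, |L i l| ∧
      (w : ZMod p) = Lhom L (ZMod p) (fun l => cell p (x l)) i := by
  have h0 : ∑ l, L i l • x l = 0 := congrFun (show Lhom L 𝕋 x = 0 from hx) i
  set t : Fin m → ℝ := fun l => Quotient.out (x l) with ht
  have h1 : ((∑ l, (L i l : ℝ) * t l : ℝ) : 𝕋) = 0 := by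
    rw [← h0]
    have : ((∑ l, (L i l : ℝ) * t l : ℝ) : 𝕋) = ∑ l, (((L i l : ℝ) * t l : ℝ) : 𝕋) :=
      map_sum (QuotientAddGroup.mk' (AddSubgroup.zmultiples (1 : ℝ))) _ _
    rw [this]
    refine Finset.sum_congr rfl fun l _ => ?_
    rw [← zsmul_eq_mul, AddCircle.coe_zsmul, ht, out_coe]
  obtain ⟨n, hn⟩ := (AddCircle.coe_eq_zero_iff (1 : ℝ)).1 h1
  have hn' : (n : ℝ) = ∑ l, (L i l : ℝ) * t l := by simpa using hn
  refine ⟨∑ l, L i l * ⌊(p : ℝ) * t l⌋ - p * n, ?_, ?_⟩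
  · have e : ((∑ l, L i l * ⌊(p : ℝ) * t l⌋ - p * n : ℤ) : ℝ) =
        - ∑ l, (L i l : ℝ) * Int.fract ((p : ℝ) * t l) := by
      push_cast
      rw [hn', Finset.mul_sum, ← Finset.sum_sub_distrib, ← Finset.sum_neg_distrib]
      refine Finset.sum_congr rfl fun l _ => ?_
      rw [Int.fract]; ring
    have e2 : |((∑ l, L i l * ⌊(p : ℝ) * t l⌋ - p * n : ℤ) : ℝ)| ≤ ∑ l, |(L i l : ℝ)| := by
      rw [e, abs_neg]
      refine (Finset.abs_sum_le_sum_abs _ _).trans (Finset.sum_le_sum fun l _ => ?_)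
      rw [abs_mul, abs_of_nonneg (Int.fract_nonneg ((p : ℝ) * t l))]
      exact mul_le_of_le_one_right (abs_nonneg _) (Int.fract_lt_one _).le
    have e3 : |∑ l, L i l * ⌊(p : ℝ) * t l⌋ - p * n| ≤ ∑ l, |L i l| := by
      exact_mod_cast e2
    refine e3.trans ?_
    exact Finset.single_le_sum (f := fun i => ∑ l, |L i l|)
      (fun i _ => Finset.sum_nonneg fun l _ => abs_nonneg _) (Finset.mem_univ i)
  · show _ = ∑ l, L i l • cell p (x l)
    push_cast
    simp only [CharP.cast_eq_zero, zero_mul, sub_zero, zsmul_eq_mul]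
    rfl

lemma exists_right_inv {r m : ℕ} (L : Matrix (Fin r) (Fin m) ℤ)
    (hrank : (L.map (Int.cast : ℤ → ℚ)).rank = r) :
    ∃ (d : ℤ) (R : Matrix (Fin m) (Fin r) ℤ), d ≠ 0 ∧ L * R = d • (1 : Matrix (Fin r) (Fin r) ℤ) := by
  have hs : Function.Surjective (L.map (Int.cast : ℤ → ℚ)).mulVec := by
    have : LinearMap.range (L.map (Int.cast : ℤ → ℚ)).mulVecLin = ⊤ := by
      apply Submodule.eq_top_of_finrank_eq
      rw [Module.finrank_fin_fun]
      exact hrank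
    exact LinearMap.range_eq_top.1 this
  obtain ⟨B, hB⟩ := Matrix.mulVec_surjective_iff_exists_right_inverse.1 hs
  obtain ⟨b, hb⟩ := IsLocalization.exist_integer_multiples_of_finite (nonZeroDivisors ℤ)
    (fun q : Fin m × Fin r => B q.1 q.2)
  choose R hR using hb
  refine ⟨b, Matrix.of fun i k => R (i, k), nonZeroDivisors.ne_zero b.2, ?_⟩
  ext i k
  have := congrFun (congrFun hB i) k
  rw [Matrix.mul_apply] at this ⊢
  have h2 : ((∑ j, L i j * R (j, k) : ℤ) : ℚ) = (((b : ℤ) • (1 : Matrix (Fin r) (Fin r) ℤ)) i k : ℤ) := by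
    push_cast
    have e : ∀ j, (R (j, k) : ℚ) = (b : ℤ) * B j k := by
      intro j
      have := hR (j, k)
      simpa using this
    simp only [e]
    have : ∑ j, (L i j : ℚ) * B j k = (1 : Matrix (Fin r) (Fin r) ℚ) i k := by
      simpa using this
    rw [Matrix.smul_apply, smul_eq_mul]
    push_cast
    have e1 : (((1 : Matrix (Fin r) (Fin r) ℤ) i k : ℤ) : ℚ) = (1 : Matrix (Fin r) (Fin r) ℚ) i k := by
      simp [Matrix.one_apply]
    rw [e1, ← this, Finset.mul_sum]
    refine Finset.sum_congr rfl fun j _ => by ring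
  exact_mod_cast h2

lemma Lhom_surj {r m : ℕ} (L : Matrix (Fin r) (Fin m) ℤ) (d : ℤ) (R : Matrix (Fin m) (Fin r) ℤ)
    (hR : L * R = d • (1 : Matrix (Fin r) (Fin r) ℤ)) (p : ℕ) [Fact p.Prime]
    (hd : (d : ZMod p) ≠ 0) : Function.Surjective (Lhom L (ZMod p)) := by
  intro v
  refine ⟨fun j => ∑ k, (R j k : ZMod p) * ((d : ZMod p)⁻¹ * v k), ?_⟩
  ext i
  show ∑ j, L i j • ∑ k, (R j k : ZMod p) * ((d : ZMod p)⁻¹ * v k) = v i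
  have e : ∀ k, ∑ j, (L i j : ZMod p) * R j k = if i = k then (d : ZMod p) else 0 := by
    intro k
    have := congrFun (congrFun hR i) k
    rw [Matrix.mul_apply, Matrix.smul_apply, Matrix.one_apply] at this
    have := congrArg (Int.cast : ℤ → ZMod p) this
    push_cast at this
    rw [this]; split_ifs <;> simp
  simp only [zsmul_eq_mul, Finset.mul_sum]
  rw [Finset.sum_comm]
  simp only [← mul_assoc, ← Finset.sum_mul, e]
  simp [hd]

lemma card_kerZ {r m : ℕ} (L : Matrix (Fin r) (Fin m) ℤ) (p : ℕ) [Fact p.Prime]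
    (hrm : r ≤ m) (hs : Function.Surjective (Lhom L (ZMod p))) :
    Nat.card (kerZ L p) = p ^ (m - r) := by
  have h1 := AddSubgroup.card_eq_card_quotient_mul_card_addSubgroup (kerZ L p)
  have h2 : Nat.card ((Fin m → ZMod p) ⧸ kerZ L p) = Nat.card (Fin r → ZMod p) :=
    Nat.card_congr (QuotientAddGroup.quotientKerEquivOfSurjective _ hs).toEquiv
  rw [h2] at h1
  simp only [Nat.card_eq_fintype_card, Fintype.card_fun, ZMod.card, Fintype.card_fin] at h1
  have hp : 0 < p := (Fact.out : p.Prime).pos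
  have : p ^ m = p ^ r * p ^ (m - r) := by rw [← pow_add]; congr 1; omega
  rw [this] at h1
  exact (Nat.eq_of_mul_eq_mul_left (by positivity) h1).symm

/-- the vector of cell indices of a point of the kernel -/
def cellV {r m : ℕ} (L : Matrix (Fin r) (Fin m) ℤ) (p : ℕ) (x : kerT L) : Fin m → ZMod p :=
  fun i => cell p ((x : Fin m → 𝕋) i)

lemma cube_eq {r m : ℕ} (L : Matrix (Fin r) (Fin m) ℤ) (p : ℕ) (hp : 0 < p) (j : Fin m → ℤ) :
    {x : kerT L | (x : Fin m → 𝕋) - discPt m p j ∈ cube0 m p} =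
      cellV L p ⁻¹' {fun i => (j i : ZMod p)} := by
  ext x
  simp only [Set.mem_ofPred_eq, cube0, Set.mem_pi, Set.mem_univ, true_imp_iff, Set.mem_preimage,
    Set.mem_singleton_iff, funext_iff, cellV]
  exact forall_congr' fun i => mem_I0_iff p hp _ _

lemma meas_cube {r m : ℕ} (L : Matrix (Fin r) (Fin m) ℤ) (p : ℕ) (hp : 0 < p)
    (j : Fin m → ZMod p) : MeasurableSet (cellV L p ⁻¹' {j}) := by
  have : NeZero p := ⟨hp.ne'⟩
  have h := cube_eq L p hp (fun i => ((j i).val : ℤ))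
  have e : (fun i => ((((j i).val : ℕ) : ℤ) : ZMod p)) = j := by ext i; simp
  rw [e] at h
  rw [← h]
  have hc : MeasurableSet (cube0 m p) :=
    MeasurableSet.univ_pi fun _ => measurableSet_I _ _
  have hf : Measurable fun x : kerT L => (x : Fin m → 𝕋) - discPt m p (fun i => ((j i).val : ℤ)) :=
    (Continuous.sub continuous_subtype_val continuous_const).measurable
  exact hf hc

lemma shift {r m : ℕ} (L : Matrix (Fin r) (Fin m) ℤ) (p : ℕ) (hp : 0 < p)
    (μL : Measure (kerT L)) (hHaar : μL.IsAddHaarMeasure) (j h : Fin m → ZMod p)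
    (hh : h ∈ kerZ L p) :
    μL (cellV L p ⁻¹' {h + j}) = μL (cellV L p ⁻¹' {j}) := by
  have : NeZero p := ⟨hp.ne'⟩
  have hp' : (p : ℝ) ≠ 0 := by positivity
  have hg : discPt m p (fun i => ((h i).val : ℤ)) ∈ kerT L := by
    show Lhom L 𝕋 _ = 0
    ext i
    show ∑ l, L i l • ((((((h l).val : ℕ) : ℤ) : ℝ) / p : ℝ) : 𝕋) = 0
    have h0 : ∑ l, L i l • h l = 0 := congrFun (show Lhom L (ZMod p) h = 0 from hh) i
    have h1 : ((∑ l, L i l * ((h l).val : ℤ) : ℤ) : ZMod p) = 0 := by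
      rw [← h0]; push_cast; simp
    obtain ⟨n, hn⟩ := (ZMod.intCast_zmod_eq_zero_iff_dvd _ _).1 h1
    have h2 : ∑ l, L i l • ((((((h l).val : ℕ) : ℤ) : ℝ) / p : ℝ) : 𝕋) =
        ((∑ l, (L i l : ℝ) * ((((h l).val : ℕ) : ℤ) / p : ℝ) : ℝ) : 𝕋) := by
      have : ((∑ l, (L i l : ℝ) * ((((h l).val : ℕ) : ℤ) / p : ℝ) : ℝ) : 𝕋) =
          ∑ l, (((L i l : ℝ) * ((((h l).val : ℕ) : ℤ) / p : ℝ) : ℝ) : 𝕋) :=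
        map_sum (QuotientAddGroup.mk' (AddSubgroup.zmultiples (1 : ℝ))) _ _
      rw [this]
      refine Finset.sum_congr rfl fun l _ => ?_
      rw [← zsmul_eq_mul, AddCircle.coe_zsmul]
    rw [h2, AddCircle.coe_eq_zero_iff]
    refine ⟨n, ?_⟩
    have hn' : ∑ l, (L i l : ℝ) * (((h l).val : ℤ) : ℝ) = p * n := by exact_mod_cast hn
    simp only [← mul_div_assoc]
    rw [← Finset.sum_div, hn']
    field_simp
    simp
  have e : (fun x => (⟨_, hg⟩ : kerT L) + x) ⁻¹' (cellV L p ⁻¹' {h + j}) =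
      cellV L p ⁻¹' {j} := by
    ext x
    simp only [Set.mem_preimage, Set.mem_singleton_iff]
    have : cellV L p ((⟨_, hg⟩ : kerT L) + x) = h + cellV L p x := by
      ext i
      have h9 := cell_add p hp ((x : Fin m → 𝕋) i) ((h i).val : ℤ)
      rw [add_comm] at h9
      refine h9.trans ?_
      rw [Pi.add_apply, add_comm (h i)]
      simp [cellV]
    rw [this, add_right_inj]
  rw [← e]
  have := hHaar.toIsAddLeftInvariant
  exact (measure_preimage_add μL _ _).symm

/-- **The main discrete decomposition formula.**
Let `L` be an `r × m` integer matrix of full rank `r` and let `μL` be the Haar probability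
measure on `ker_𝕋 L`. There is a bound `K_L` depending only on `L` such that for every
sufficiently large prime `p` and all `p`-measurable sets `A₁, …, A_m ⊆ 𝕋` there are
`j₁/p, …, j_K/p ∈ J(L,p)` with `K ≤ K_L` and
`S_{L,𝕋}(A₁, …, A_m) = ∑_{k=1}^K λ_k ⬝ S_{L,ℤ_p}(A₁' - j_k(1), …, A_m' - j_k(m))`,
where `λ_k = p^{m-r} μ_{L,𝕋}((j_k/p + [0,1/p)^m) ∩ ker_𝕋 L)`. -/
theorem main_formula {r m : ℕ} (L : Matrix (Fin r) (Fin m) ℤ)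
    (hrank : (L.map (Int.cast : ℤ → ℚ)).rank = r)
    (μL : Measure (kerT L)) (hHaar : μL.IsAddHaarMeasure) (hprob : IsProbabilityMeasure μL) :
    ∃ KL : ℕ, ∃ p₀ : ℕ, ∀ p : ℕ, p.Prime → p₀ ≤ p →
      ∀ A : Fin m → Set 𝕋, (∀ i, PMeasurable p (A i)) →
        ∃ K : ℕ, K ≤ KL ∧
          ∃ jj : Fin K → (Fin m → ℤ),
            (∀ k, discPt m p (jj k) ∈ Jset L p μL) ∧
            (μL {x : kerT L | ∀ i, (x : Fin m → 𝕋) i ∈ A i}).toReal =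
              ∑ k : Fin K, lamVal L p μL (jj k) *
                SZ L p (fun i => {y : ZMod p | y + ((jj k i : ℤ) : ZMod p) ∈
                  discretize p (A i)}) := by
  classical
  obtain ⟨d, R, hd, hR⟩ := exists_right_inv L hrank
  have hrm : r ≤ m := by
    have := Matrix.rank_le_width (L.map (Int.cast : ℤ → ℚ))
    omega
  set B : ℤ := ∑ i, ∑ l, |L i l| with hB
  refine ⟨(Fintype.piFinset fun _ : Fin r => Finset.Icc (-B) B).card, d.natAbs + 1, ?_⟩
  intro p hpp hpge A hA
  have hp : 0 < p := hpp.pos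
  have : Fact p.Prime := ⟨hpp⟩
  have : NeZero p := ⟨hp.ne'⟩
  have hdp : (d : ZMod p) ≠ 0 := by
    intro h
    have h1 := (ZMod.intCast_zmod_eq_zero_iff_dvd _ _).1 h
    have h2 := Nat.le_of_dvd (Int.natAbs_pos.2 hd) (Int.natCast_dvd.1 h1)
    omega
  have hs := Lhom_surj L d R hR p hdp
  have hcard := card_kerZ L p hrm hs
  set P : (Fin m → ZMod p) → ℝ := fun j => (μL (cellV L p ⁻¹' {j})).toReal with hP
  set S : Finset (Fin r → ZMod p) := Finset.univ.filter fun v =>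
    ∃ j, Lhom L (ZMod p) j = v ∧ 0 < μL (cellV L p ⁻¹' {j}) with hS
  have hSj : ∀ v : S, ∃ j, Lhom L (ZMod p) j = v ∧ 0 < μL (cellV L p ⁻¹' {j}) :=
    fun v => (Finset.mem_filter.1 v.2).2
  choose J hJ1 hJ2 using hSj
  have cJ : ∀ v : S, (fun i => ((((J v i).val : ℕ) : ℤ) : ZMod p)) = J v := by
    intro v; ext i; simp
  refine ⟨S.card, ?_, fun k i => ((J (S.equivFin.symm k) i).val : ℤ), ?_, ?_⟩
  · -- bound on the number of cosets
    refine le_trans (Finset.card_le_card ?_)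
      (Finset.card_image_le (f := fun (w : Fin r → ℤ) i => (w i : ZMod p)))
    intro v hv
    obtain ⟨j, hj, hpos⟩ := (Finset.mem_filter.1 hv).2
    obtain ⟨x, hx⟩ := nonempty_of_measure_ne_zero hpos.ne'
    choose w hw1 hw2 using exists_bound L p x x.2
    rw [Finset.mem_image]
    refine ⟨w, ?_, ?_⟩
    · rw [Fintype.mem_piFinset]
      intro i
      rw [Finset.mem_Icc]
      exact abs_le.1 (hw1 i)
    · ext i
      rw [hw2, ← hj]
      have : cellV L p x = j := hx
      rw [← this]
      rfl
  · intro k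
    refine ⟨⟨_, rfl⟩, ?_⟩
    rw [cube_eq L p hp, cJ]
    exact hJ2 _
  · -- the formula
    set T : Finset (Fin m → ZMod p) := Finset.univ.filter fun j => ∀ i, j i ∈ discretize p (A i)
      with hT
    have h1 : {x : kerT L | ∀ i, (x : Fin m → 𝕋) i ∈ A i} = cellV L p ⁻¹' (T : Set _) := by
      ext x
      simp only [Set.mem_ofPred_eq, Set.mem_preimage, Finset.mem_coe, hT, Finset.mem_filter,
        Finset.mem_univ, true_and]
      exact forall_congr' fun i => mem_A_iff p hp (A i) (hA i) _
    have h2 : (μL {x : kerT L | ∀ i, (x : Fin m → 𝕋) i ∈ A i}).toReal = ∑ j ∈ T, P j := by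
      rw [h1, ← sum_measure_preimage_singleton T fun y _ => meas_cube L p hp y,
        ENNReal.toReal_sum fun j _ => measure_ne_top _ _]
    rw [h2, Equiv.sum_comp S.equivFin.symm (fun v : S => lamVal L p μL
      (fun i => ((J v i).val : ℤ)) * SZ L p (fun i => {y : ZMod p | y +
        ((((J v i).val : ℕ) : ℤ) : ZMod p) ∈ discretize p (A i)}))]
    have h3 : ∑ j ∈ T, P j = ∑ v ∈ S, ∑ j ∈ T with Lhom L (ZMod p) j = v, P j := by
      rw [← Finset.sum_fiberwise T (Lhom L (ZMod p)) P]
      symm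
      apply Finset.sum_subset (Finset.subset_univ _)
      intro v _ hv
      refine Finset.sum_eq_zero fun j hj => ?_
      have hj' := (Finset.mem_filter.1 hj).2
      by_contra hne
      refine hv (Finset.mem_filter.2 ⟨Finset.mem_univ _, j, hj', ?_⟩)
      rw [pos_iff_ne_zero]
      intro h0
      apply hne
      simp [hP, h0]
    rw [h3, ← Finset.sum_coe_sort S]
    refine Finset.sum_congr rfl fun v _ => ?_
    have hlam : lamVal L p μL (fun i => ((J v i).val : ℤ)) = (p : ℝ) ^ (m - r) * P (J v) := by
      unfold lamVal
      rw [cube_eq L p hp, cJ]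
    have h4 : ∑ j ∈ T with Lhom L (ZMod p) j = v, P j =
        ((T.filter fun j => Lhom L (ZMod p) j = v).card : ℝ) * P (J v) := by
      rw [← nsmul_eq_mul]
      apply Finset.sum_eq_card_nsmul
      intro j hj
      have hj' := (Finset.mem_filter.1 hj).2
      have hk : j - J v ∈ kerZ L p := by
        show Lhom L (ZMod p) (j - J v) = 0
        rw [map_sub, hj', hJ1, sub_self]
      have := shift L p hp μL hHaar (J v) (j - J v) hk
      rw [sub_add_cancel] at this
      simp only [hP, this]
    have h5 : Nat.card {x : ↥(kerZ L p) // ∀ i, (x : Fin m → ZMod p) i ∈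
        {y : ZMod p | y + ((((J v i).val : ℕ) : ℤ) : ZMod p) ∈ discretize p (A i)}} =
        (T.filter fun j => Lhom L (ZMod p) j = v).card := by
      rw [← Nat.card_eq_finsetCard]
      have hv : ∀ i, ((((J v i).val : ℕ) : ℤ) : ZMod p) = J v i := fun i => congrFun (cJ v) i
      simp only [hv]
      refine Nat.card_congr ⟨fun x => ⟨(x : kerZ L p) + J v, ?_⟩,
        fun j => ⟨⟨(j : Fin m → ZMod p) - J v, ?_⟩, ?_⟩, ?_, ?_⟩
      · have hx0 : Lhom L (ZMod p) ((x : kerZ L p) : Fin m → ZMod p) = 0 := x.1.2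
        refine Finset.mem_filter.2 ⟨Finset.mem_filter.2 ⟨Finset.mem_univ _, x.2⟩, ?_⟩
        rw [map_add, hx0, hJ1, zero_add]
      · show Lhom L (ZMod p) _ = 0
        rw [map_sub, (Finset.mem_filter.1 j.2).2, hJ1, sub_self]
      · intro i
        have := (Finset.mem_filter.1 (Finset.mem_filter.1 j.2).1).2 i
        simpa using this
      · intro x; ext; simp
      · intro j; ext; simp
    unfold SZ
    rw [hlam, h4, h5, hcard]
    have : (p : ℝ) ≠ 0 := by positivity
    push_cast
    field_simp
end
end

section
/- Let L be an r×m integer matrix of full rank r. Then there exists λ* > 0 depending only on L such that for every sufficiently large positive integer p and every j/p ∈ J(L,p) one has λ(j) := p^{m−r} μ_L((j/p + [0,1/p)^m) ∩ ker_T L) ≥ λ*. -/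
open MeasureTheory Set

noncomputable section

/-- Projection `ℝ^m → 𝕋^m`. -/
def piT (m : ℕ) : (Fin m → ℝ) →+ (Fin m → 𝕋) where
  toFun y := fun i => (y i : 𝕋)
  map_zero' := by ext i; simp
  map_add' x y := by ext i; simp

/-- The real linear map of `L`. -/
def AR {r m : ℕ} (L : Matrix (Fin r) (Fin m) ℤ) : (Fin m → ℝ) →ₗ[ℝ] (Fin r → ℝ) :=
  (L.map (Int.cast : ℤ → ℝ)).mulVecLin

lemma AR_apply {r m : ℕ} (L : Matrix (Fin r) (Fin m) ℤ) (y : Fin m → ℝ) (i : Fin r) :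
    AR L y i = ∑ j, (L i j : ℝ) * y j := by
  simp [AR, Matrix.mulVec, dotProduct]

lemma Lhom_piT {r m : ℕ} (L : Matrix (Fin r) (Fin m) ℤ) (y : Fin m → ℝ) :
    Lhom L 𝕋 (piT m y) = piT r (AR L y) := by
  ext i
  simp only [Lhom, piT, AddMonoidHom.coe_mk, ZeroHom.coe_mk, AR_apply]
  have : ((∑ j, (L i j : ℝ) * y j : ℝ) : 𝕋)
      = QuotientAddGroup.mk' (AddSubgroup.zmultiples (1 : ℝ)) (∑ j, (L i j : ℝ) * y j) := rfl
  rw [this, map_sum]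
  refine Finset.sum_congr rfl fun j _ => ?_
  rw [← zsmul_eq_mul, map_zsmul]
  rfl

lemma piT_eq_zero {m : ℕ} (y : Fin m → ℝ) :
    piT m y = 0 ↔ ∃ n : Fin m → ℤ, ∀ i, y i = n i := by
  constructor
  · intro h
    have h1 : ∀ i, ∃ n : ℤ, y i = n := by
      intro i
      have h2 : ((y i : ℝ) : 𝕋) = 0 := congrFun h i
      rw [AddCircle.coe_eq_zero_iff] at h2
      obtain ⟨n, hn⟩ := h2
      exact ⟨n, by simpa using hn.symm⟩
    choose n hn using h1
    exact ⟨n, hn⟩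
  · rintro ⟨n, hn⟩
    ext i
    change ((y i : ℝ) : 𝕋) = 0
    rw [AddCircle.coe_eq_zero_iff]
    exact ⟨n i, by simp [hn i]⟩

lemma piT_mem_kerT {r m : ℕ} (L : Matrix (Fin r) (Fin m) ℤ) (y : Fin m → ℝ) :
    piT m y ∈ kerT L ↔ ∃ n : Fin r → ℤ, ∀ i, AR L y i = n i := by
  rw [← piT_eq_zero, ← Lhom_piT]
  exact AddMonoidHom.mem_ker

lemma piT_surj {m : ℕ} (x : Fin m → 𝕋) : ∃ y, piT m y = x := by
  have : ∀ i, ∃ t : ℝ, (t : 𝕋) = x i := fun i => QuotientAddGroup.mk_surjective (x i)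
  choose y hy using this
  exact ⟨y, funext hy⟩

/-- A parametrization of the real kernel. -/
lemma exists_param {r m : ℕ} (L : Matrix (Fin r) (Fin m) ℤ)
    (hrank : (L.map (Int.cast : ℤ → ℚ)).rank = r) :
    ∃ φ : (Fin (m - r) → ℝ) →ₗ[ℝ] (Fin m → ℝ), LinearMap.range φ = LinearMap.ker (AR L) := by
  have hs : Function.Surjective (L.map (Int.cast : ℤ → ℚ)).mulVec := by
    have : LinearMap.range (L.map (Int.cast : ℤ → ℚ)).mulVecLin = ⊤ := by
      apply Submodule.eq_top_of_finrank_eq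
      rw [← Matrix.rank, hrank]; simp
    exact LinearMap.range_eq_top.1 this
  obtain ⟨B, hB⟩ := Matrix.mulVec_surjective_iff_exists_right_inverse.1 hs
  have hB' : (L.map (Int.cast : ℤ → ℝ)) * B.map (Rat.castHom ℝ) = 1 := by
    have := congrArg (fun M => M.map (Rat.castHom ℝ)) hB
    simp only [Matrix.map_mul] at this
    rw [Matrix.map_one _ (map_zero _) (map_one _)] at this
    rw [← this]
    congr 1
  have hs' : LinearMap.range (AR L) = ⊤ :=
    LinearMap.range_eq_top.2 (Matrix.mulVec_surjective_iff_exists_right_inverse.2 ⟨_, hB'⟩)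
  have hd : Module.finrank ℝ (LinearMap.ker (AR L)) = m - r := by
    have := LinearMap.finrank_range_add_finrank_ker (AR L)
    rw [hs'] at this
    simp at this
    omega
  let b := Module.finBasisOfFinrankEq ℝ (LinearMap.ker (AR L)) hd
  refine ⟨(LinearMap.ker (AR L)).subtype ∘ₗ b.equivFun.symm.toLinearMap, ?_⟩
  rw [LinearMap.range_comp_of_range_eq_top _ (LinearEquiv.range _), Submodule.range_subtype]

section param
variable {r m d : ℕ} (L : Matrix (Fin r) (Fin m) ℤ) (φ : (Fin d → ℝ) →ₗ[ℝ] (Fin m → ℝ))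
  (hφ : LinearMap.range φ = LinearMap.ker (AR L))

lemma AR_phi (hφ : LinearMap.range φ = LinearMap.ker (AR L)) (c : Fin d → ℝ) :
    AR L (φ c) = 0 := by
  have : φ c ∈ LinearMap.ker (AR L) := hφ ▸ ⟨c, rfl⟩
  simpa using this

/-- Induced map into the toral kernel. -/
def psi : (Fin d → ℝ) →+ kerT L :=
  AddMonoidHom.codRestrict ((piT m).comp φ.toAddMonoidHom) (kerT L) fun c =>
    (piT_mem_kerT L _).2 ⟨0, fun i => by
      change AR L (φ c) i = _
      rw [AR_phi L φ hφ]; simp⟩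

lemma psi_coe (c : Fin d → ℝ) : ((psi L φ hφ c : kerT L) : Fin m → 𝕋) = piT m (φ c) := rfl

/-- Small parallelepiped. -/
def Sset (n : ℕ) : Set (kerT L) := psi L φ hφ '' {c | ∀ i, 0 ≤ c i ∧ c i < 1 / (n : ℝ)}

variable (μL : Measure (kerT L)) [μL.IsAddHaarMeasure] [IsProbabilityMeasure μL]

lemma measure_S_le (n : ℕ) (hn : 0 < n) :
    μL (Sset L φ hφ 1) ≤ (n : ENNReal) ^ d * μL (Sset L φ hφ n) := by
  have hn' : (0 : ℝ) < n := by exact_mod_cast hn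
  have hsub : Sset L φ hφ 1 ⊆ ⋃ k : Fin d → Fin n,
      (fun x => -psi L φ hφ (fun i => ((k i : ℕ) : ℝ) / n) + x) ⁻¹' Sset L φ hφ n := by
    rintro _ ⟨c, hc, rfl⟩
    simp only [Nat.cast_one, div_one, Set.mem_ofPred_eq] at hc
    have hfl : ∀ i, ⌊c i * n⌋₊ < n := fun i => by
      rw [Nat.floor_lt (mul_nonneg (hc i).1 hn'.le)]
      nlinarith [(hc i).2]
    refine Set.mem_iUnion.2 ⟨fun i => ⟨⌊c i * n⌋₊, hfl i⟩, ?_⟩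
    refine ⟨fun i => c i - (⌊c i * n⌋₊ : ℝ) / n, fun i => ⟨?_, ?_⟩, ?_⟩
    · have := Nat.floor_le (mul_nonneg (hc i).1 hn'.le)
      rw [sub_nonneg, div_le_iff₀ hn']; exact this
    · have := Nat.lt_floor_add_one (c i * n)
      rw [sub_lt_iff_lt_add, ← add_div, lt_div_iff₀ hn']; linarith
    · change _ = -psi L φ hφ _ + psi L φ hφ c
      rw [← map_neg, ← map_add]
      congr 1
      ext i
      simp only [Pi.add_apply, Pi.neg_apply]
      ring
  calc μL (Sset L φ hφ 1) ≤ _ := measure_mono hsub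
    _ ≤ _ := measure_iUnion_fintype_le _ _
    _ = _ := by
      simp [measure_preimage_add]

lemma measure_S_pos : 0 < μL (Sset L φ hφ 1) := by
  rw [pos_iff_ne_zero]
  intro h0
  have key : ∀ n : Fin r → ℤ, ∃ x₀ : kerT L, ∀ y (hy : ∀ i, AR L y i = n i),
      ∃ c, (⟨piT m y, (piT_mem_kerT L y).2 ⟨n, hy⟩⟩ : kerT L) = x₀ + psi L φ hφ c := by
    intro n
    by_cases hex : ∃ y₀, ∀ i, AR L y₀ i = n i
    · obtain ⟨y₀, hy₀⟩ := hex
      refine ⟨⟨piT m y₀, (piT_mem_kerT L y₀).2 ⟨n, hy₀⟩⟩, fun y hy => ?_⟩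
      have : y - y₀ ∈ LinearMap.range φ := by
        rw [hφ, LinearMap.mem_ker, map_sub]
        ext i
        simp [hy, hy₀]
      obtain ⟨c, hc⟩ := this
      refine ⟨c, Subtype.ext ?_⟩
      change piT m y = piT m y₀ + piT m (φ c)
      rw [hc, ← map_add]; congr 1; abel
    · exact ⟨0, fun y hy => (hex ⟨y, hy⟩).elim⟩
  choose x₀ hx₀ using key
  have hcov : (Set.univ : Set (kerT L)) ⊆ ⋃ q : (Fin r → ℤ) × (Fin d → ℤ),
      (fun x => -(x₀ q.1 + psi L φ hφ (fun i => (q.2 i : ℝ))) + x) ⁻¹' Sset L φ hφ 1 := by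
    rintro ⟨x, hx⟩ -
    obtain ⟨y, rfl⟩ := piT_surj x
    obtain ⟨n, hn⟩ := (piT_mem_kerT L y).1 hx
    obtain ⟨c, hc⟩ := hx₀ n y hn
    refine Set.mem_iUnion.2 ⟨(n, fun i => ⌊c i⌋), fun i => c i - ⌊c i⌋, fun i => ⟨?_, ?_⟩, ?_⟩
    · linarith [Int.floor_le (c i)]
    · simp only [Nat.cast_one, div_one]; linarith [Int.lt_floor_add_one (c i)]
    · change _ = -(x₀ n + psi L φ hφ _) + _
      rw [hc]
      have : (fun i => c i - (⌊c i⌋ : ℝ)) = c - fun i => (⌊c i⌋ : ℝ) := rfl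
      rw [this, map_sub]
      abel
  have : μL Set.univ = 0 := by
    refine measure_mono_null hcov (measure_iUnion_null fun q => ?_)
    rw [measure_preimage_add]; exact h0
  simp at this

/-- Coordinate slices are null. -/
lemma slice_null (hφ : LinearMap.range φ = LinearMap.ker (AR L))
    (i : Fin m) (hi : ∃ c, φ c i ≠ 0) (a : 𝕋) :
    μL {x : kerT L | (x : Fin m → 𝕋) i = a} = 0 := by
  obtain ⟨c, hc⟩ := hi
  have heq : ∀ b : 𝕋, μL {x : kerT L | (x : Fin m → 𝕋) i = b}
      = μL {x : kerT L | (x : Fin m → 𝕋) i = a} := by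
    intro b
    obtain ⟨τ, hτ⟩ : ∃ t : ℝ, (t : 𝕋) = b - a := QuotientAddGroup.mk_surjective (b - a)
    rw [← measure_preimage_add μL (psi L φ hφ ((τ / φ c i) • c)) {x | (x : Fin m → 𝕋) i = b}]
    congr 1
    ext x
    have h1 : ((psi L φ hφ ((τ / φ c i) • c) : kerT L) : Fin m → 𝕋) i = b - a := by
      rw [psi_coe, ← hτ]
      change ((φ ((τ / φ c i) • c) i : ℝ) : 𝕋) = _
      rw [map_smul, Pi.smul_apply, smul_eq_mul, div_mul_cancel₀ _ hc]
    simp only [Set.mem_preimage, Set.mem_ofPred_eq, AddSubgroup.coe_add, Pi.add_apply, h1]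
    constructor
    · intro h
      have h5 := congrArg (fun z => z - b + a) h
      rw [sub_self, zero_add] at h5
      rw [← h5]; abel
    · rintro h; rw [h]; abel
  have hm : ∀ b : 𝕋, MeasurableSet {x : kerT L | (x : Fin m → 𝕋) i = b} := fun b =>
    (isClosed_singleton.preimage
      ((continuous_apply i).comp continuous_subtype_val) : IsClosed _).measurableSet
  have hcount := Measure.countable_meas_pos_of_disjoint_iUnion (μ := μL) hm (by
    intro b b' hbb
    rw [Function.onFun, Set.disjoint_left]
    intro x hx hx'
    exact hbb (hx.symm.trans hx'))
  by_contra hne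
  have huniv : {b : 𝕋 | 0 < μL {x : kerT L | (x : Fin m → 𝕋) i = b}} = Set.univ := by
    ext b
    simp only [Set.mem_ofPred_eq, Set.mem_univ, iff_true, heq b]
    exact pos_iff_ne_zero.2 hne
  rw [huniv, Set.countable_univ_iff] at hcount
  have h01 : Countable (Set.Ico (0 : ℝ) (0 + 1)) :=
    haveI : Fact ((0 : ℝ) < 1) := ⟨one_pos⟩
    (AddCircle.equivIco (1 : ℝ) 0).symm.injective.countable
  have h2 : (Set.Ico (0 : ℝ) (0 + 1)).Countable := h01
  have h3 := h2.mono (Set.Ioo_subset_Ico_self)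
  have h4 := Cardinal.le_aleph0_iff_set_countable.2 h3
  rw [Cardinal.mk_Ioo_real (by norm_num)] at h4
  exact absurd h4 (not_le.2 Cardinal.aleph0_lt_continuum)

/-- The polytope `P_v`. -/
def Pset (v : Fin r → ℤ) : Set (Fin m → ℝ) :=
  {t | (∀ i, 0 ≤ t i ∧ t i < 1) ∧ ∀ i, AR L t i = v i}

lemma Pset_finite : {v : Fin r → ℤ | (Pset L v).Nonempty}.Finite := by
  refine (Set.finite_Icc (fun i => -∑ j, |L i j|) (fun i => ∑ j, |L i j|)).subset ?_
  rintro v ⟨t, ht, hv⟩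
  have : ∀ i, |v i| ≤ ∑ j, |L i j| := by
    intro i
    have h : |(v i : ℝ)| ≤ ∑ j, |(L i j : ℝ)| := by
      rw [← hv i, AR_apply]
      refine (Finset.abs_sum_le_sum_abs _ _).trans (Finset.sum_le_sum fun j _ => ?_)
      rw [abs_mul, abs_of_nonneg (ht j).1]
      exact mul_le_of_le_one_right (abs_nonneg _) (ht j).2.le
    exact_mod_cast h
  exact ⟨fun i => (abs_le.1 (this i)).1, fun i => (abs_le.1 (this i)).2⟩

/-- A positive point from coordinatewise positive points. -/
lemma exists_pos_pt (v : Fin r → ℤ) (hne : (Pset L v).Nonempty) (F : Finset (Fin m))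
    (h : ∀ i ∈ F, ∃ t ∈ Pset L v, 0 < t i) : ∃ t ∈ Pset L v, ∀ i ∈ F, 0 < t i := by
  induction F using Finset.induction_on with
  | empty => obtain ⟨t, ht⟩ := hne; exact ⟨t, ht, by simp⟩
  | insert a F ha ih =>
    obtain ⟨t, ht, htF⟩ := ih fun i hi => h i (Finset.mem_insert_of_mem hi)
    obtain ⟨s, hs, hsa⟩ := h a (Finset.mem_insert_self _ _)
    refine ⟨(1 / 2 : ℝ) • (t + s), ⟨fun i => ?_, fun i => ?_⟩, fun i hi => ?_⟩
    · have := ht.1 i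
      have := hs.1 i
      simp only [Pi.smul_apply, Pi.add_apply, smul_eq_mul]
      constructor <;> linarith
    · rw [map_smul, map_add]
      simp only [Pi.smul_apply, Pi.add_apply, smul_eq_mul, ht.2 i, hs.2 i]
      ring
    · simp only [Pi.smul_apply, Pi.add_apply, smul_eq_mul]
      have h1 := (ht.1 i).1
      have h2 := (hs.1 i).1
      rcases Finset.mem_insert.1 hi with rfl | hi
      · linarith
      · linarith [htF i hi]

/-- `v` is good if `P_v` is not contained in a nontrivial coordinate face. -/
def Good (v : Fin r → ℤ) : Prop :=
  (Pset L v).Nonempty ∧ ∀ i, (∃ c, φ c i ≠ 0) → ∃ t ∈ Pset L v, 0 < t i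

lemma good_box (hφ : LinearMap.range φ = LinearMap.ker (AR L))
    (v : Fin r → ℤ) (hv : Good L φ v) : ∀ᶠ K : ℕ in Filter.atTop,
    ∃ t ∈ Pset L v, ∀ c : Fin d → ℝ, (∀ i, 0 ≤ c i ∧ c i < 1 / (K : ℝ)) →
      t + φ c ∈ Pset L v := by
  classical
  obtain ⟨t, ht, htF⟩ := exists_pos_pt L v hv.1
    (Finset.univ.filter fun i => ∃ c, φ c i ≠ 0) (fun i hi => hv.2 i (by simpa using hi))
  have hcont : Continuous φ := LinearMap.continuous_of_finiteDimensional φ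
  have hev : ∀ᶠ c in nhds (0 : Fin d → ℝ), ∀ i, 0 ≤ (t + φ c) i ∧ (t + φ c) i < 1 := by
    rw [Filter.eventually_all]
    intro i
    by_cases hi : ∃ c, φ c i ≠ 0
    · have hci : Continuous fun c => (t + φ c) i := by fun_prop
      have h0 : (t + φ 0) i = t i := by simp
      have hp := htF i (by simpa using hi)
      have e1 : ∀ᶠ c in nhds (0 : Fin d → ℝ), 0 < (t + φ c) i :=
        hci.continuousAt.eventually (lt_mem_nhds (by simpa using hp))
      have e2 : ∀ᶠ c in nhds (0 : Fin d → ℝ), (t + φ c) i < 1 :=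
        hci.continuousAt.eventually (gt_mem_nhds (by simpa using (ht.1 i).2))
      filter_upwards [e1, e2] with c h1 h2 using ⟨h1.le, h2⟩
    · push Not at hi
      exact Filter.Eventually.of_forall fun c => by simpa [hi c] using ht.1 i
  obtain ⟨δ, hδ, hb⟩ := Metric.eventually_nhds_iff.1 hev
  have hK : ∀ᶠ K : ℕ in Filter.atTop, 1 / (K : ℝ) < δ :=
    tendsto_one_div_atTop_nhds_zero_nat.eventually (gt_mem_nhds hδ)
  filter_upwards [hK] with K hK
  refine ⟨t, ht, fun c hc => ⟨hb ?_, fun i => ?_⟩⟩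
  · rw [dist_zero_right, pi_norm_lt_iff hδ]
    intro i
    rw [Real.norm_of_nonneg (hc i).1]
    exact (hc i).2.trans hK
  · rw [map_add, AR_phi L φ hφ, add_zero]; exact ht.2 i

lemma good_uniform (hφ : LinearMap.range φ = LinearMap.ker (AR L)) :
    ∃ K : ℕ, 0 < K ∧ ∀ v, Good L φ v → ∃ t ∈ Pset L v, ∀ c : Fin d → ℝ,
    (∀ i, 0 ≤ c i ∧ c i < 1 / (K : ℝ)) → t + φ c ∈ Pset L v := by
  have h := (Filter.eventually_all_finite (Pset_finite L) (l := Filter.atTop)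
    (p := fun v (K : ℕ) => Good L φ v → ∃ t ∈ Pset L v, ∀ c : Fin d → ℝ,
    (∀ i, 0 ≤ c i ∧ c i < 1 / (K : ℝ)) → t + φ c ∈ Pset L v)).2 (fun v _ => by
      by_cases hv : Good L φ v
      · filter_upwards [good_box L φ hφ v hv] with K hK _ using hK
      · exact Filter.Eventually.of_forall fun K h => (hv h).elim)
  obtain ⟨K, hK, hK0⟩ := (h.and (Filter.eventually_gt_atTop 0)).exists
  exact ⟨K, hK0, fun v hv => hK v hv.1 hv⟩

lemma discPt_eq (p : ℕ) (j : Fin m → ℤ) :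
    discPt m p j = piT m (fun i => (j i : ℝ) / p) := rfl

lemma mem_cell (p : ℕ) (hp : 0 < p) (j : Fin m → ℤ) (x : kerT L)
    (hx : (x : Fin m → 𝕋) - discPt m p j ∈ cube0 m p) :
    ∃ v n : Fin r → ℤ, (∀ i, v i + ∑ k, L i k * j k = p * n i) ∧ ∃ t ∈ Pset L v,
      (x : Fin m → 𝕋) = piT m (fun i => ((j i : ℝ) + t i) / p) := by
  have hp' : (0 : ℝ) < p := by exact_mod_cast hp
  have h1 : ∀ i, ∃ s : ℝ, (0 ≤ s ∧ s < 1 / (p : ℝ)) ∧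
      (s : 𝕋) = ((x : Fin m → 𝕋) - discPt m p j) i := fun i => by
    obtain ⟨s, hs, h⟩ := hx i (Set.mem_univ i)
    exact ⟨s, hs, h⟩
  choose s hs hsx using h1
  have hxe : (x : Fin m → 𝕋) = piT m (fun i => ((j i : ℝ) + p * s i) / p) := by
    have : (x : Fin m → 𝕋) = discPt m p j + piT m s := by
      have h2 : piT m s = (x : Fin m → 𝕋) - discPt m p j := funext hsx
      rw [h2]; abel
    rw [this, discPt_eq, ← map_add]
    congr 1
    ext i
    simp only [Pi.add_apply]
    field_simp
  have hxk : piT m (fun i => ((j i : ℝ) + p * s i) / p) ∈ kerT L := hxe ▸ x.2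
  obtain ⟨n, hn⟩ := (piT_mem_kerT L _).1 hxk
  refine ⟨fun i => p * n i - ∑ k, L i k * j k, n, fun i => by ring, fun i => p * s i,
    ⟨fun i => ⟨mul_nonneg hp'.le (hs i).1, ?_⟩, fun i => ?_⟩, hxe⟩
  · have := (hs i).2
    rw [lt_div_iff₀ hp'] at this
    linarith
  · have h := hn i
    rw [AR_apply] at h ⊢
    push_cast
    rw [← h, Finset.mul_sum, ← Finset.sum_sub_distrib]
    refine Finset.sum_congr rfl fun k _ => ?_
    field_simp
    ring

lemma exists_good (hφ : LinearMap.range φ = LinearMap.ker (AR L))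
    (p : ℕ) (hp : 0 < p) (j : Fin m → ℤ)
    (hpos : 0 < μL {x : kerT L | (x : Fin m → 𝕋) - discPt m p j ∈ cube0 m p}) :
    ∃ v n : Fin r → ℤ, (∀ i, v i + ∑ k, L i k * j k = p * n i) ∧ Good L φ v := by
  by_contra hcon
  push Not at hcon
  refine hpos.ne' (measure_mono_null (t := ⋃ i : {i : Fin m // ∃ c, φ c i ≠ 0},
    {x : kerT L | (x : Fin m → 𝕋) i.1 = (((j i.1 : ℝ) / p : ℝ) : 𝕋)}) ?_
    (measure_iUnion_null fun i => slice_null L φ μL hφ i.1 i.2 _))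
  intro x hx
  obtain ⟨v, n, hvn, t, ht, hxt⟩ := mem_cell L p hp j x hx
  have hb := hcon v n hvn
  have : ∃ i, (∃ c, φ c i ≠ 0) ∧ ∀ t ∈ Pset L v, t i ≤ 0 := by
    by_contra hno
    push Not at hno
    exact hb ⟨⟨t, ht⟩, fun i hc => hno i hc⟩
  obtain ⟨i, hi, hle⟩ := this
  refine Set.mem_iUnion.2 ⟨⟨i, hi⟩, ?_⟩
  have h0 : t i = 0 := le_antisymm (hle t ht) (ht.1 i).1
  change (x : Fin m → 𝕋) i = _
  rw [hxt]
  change ((((j i : ℝ) + t i) / p : ℝ) : 𝕋) = _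
  rw [h0, add_zero]

lemma cell_lower (K p : ℕ) (hK : 0 < K) (hp : 0 < p) (j : Fin m → ℤ) (v n : Fin r → ℤ)
    (hvn : ∀ i, v i + ∑ k, L i k * j k = p * n i) (t : Fin m → ℝ) (ht : t ∈ Pset L v)
    (hbox : ∀ c : Fin d → ℝ, (∀ i, 0 ≤ c i ∧ c i < 1 / (K : ℝ)) → t + φ c ∈ Pset L v) :
    μL (Sset L φ hφ (K * p)) ≤
      μL {x : kerT L | (x : Fin m → 𝕋) - discPt m p j ∈ cube0 m p} := by
  have hp' : (0 : ℝ) < p := by exact_mod_cast hp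
  have hK' : (0 : ℝ) < K := by exact_mod_cast hK
  have hmem : piT m (fun i => ((j i : ℝ) + t i) / p) ∈ kerT L := by
    refine (piT_mem_kerT L _).2 ⟨n, fun i => ?_⟩
    have h1 : (v i : ℝ) + ∑ k, (L i k : ℝ) * j k = p * n i := by exact_mod_cast hvn i
    rw [← ht.2 i, AR_apply] at h1
    rw [AR_apply]
    have h2 : ∑ k, (L i k : ℝ) * (((j k : ℝ) + t k) / p)
        = (∑ k, (L i k : ℝ) * t k + ∑ k, (L i k : ℝ) * j k) / p := by
      rw [← Finset.sum_add_distrib, Finset.sum_div]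
      refine Finset.sum_congr rfl fun k _ => ?_
      ring
    rw [h2, h1]
    field_simp
  rw [← measure_preimage_add μL (⟨_, hmem⟩ : kerT L)
    {x : kerT L | (x : Fin m → 𝕋) - discPt m p j ∈ cube0 m p}]
  refine measure_mono ?_
  rintro _ ⟨c, hc, rfl⟩
  have hin := hbox ((p : ℝ) • c) (fun i => by
    have := hc i
    push_cast at this
    simp only [Pi.smul_apply, smul_eq_mul]
    refine ⟨mul_nonneg hp'.le this.1, ?_⟩
    have h2 := this.2
    rw [lt_div_iff₀ (by positivity)] at h2 ⊢
    linarith)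
  intro i _
  refine ⟨(t + φ ((p : ℝ) • c)) i / p, ⟨div_nonneg (hin.1 i).1 hp'.le,
    (div_lt_div_iff_of_pos_right hp').2 (hin.1 i).2⟩, ?_⟩
  change _ = ((((j i : ℝ) + t i) / p : ℝ) : 𝕋) + ((φ c i : ℝ) : 𝕋) - (((j i : ℝ) / p : ℝ) : 𝕋)
  rw [← AddCircle.coe_add, ← AddCircle.coe_sub]
  congr 1
  simp only [map_smul, Pi.add_apply, Pi.smul_apply, smul_eq_mul]
  field_simp
  ring

end param

/-- **Uniform positive lower bound for the weights `λ(j)`.**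
Let `L` be an `r × m` integer matrix of full rank `r` and let `μL` be the Haar probability
measure on `ker_𝕋 L`. There is `λ* > 0` depending only on `L` such that for every
sufficiently large positive integer `p` and every `j/p ∈ J(L,p)` one has `λ(j) ≥ λ*`. -/
theorem lambda_lower_bound {r m : ℕ} (L : Matrix (Fin r) (Fin m) ℤ)
    (hrank : (L.map (Int.cast : ℤ → ℚ)).rank = r)
    (μL : Measure (kerT L)) (hHaar : μL.IsAddHaarMeasure) (hprob : IsProbabilityMeasure μL) :
    ∃ lamStar : ℝ, 0 < lamStar ∧
      ∃ p₀ : ℕ, ∀ p : ℕ, p₀ ≤ p →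
        ∀ j : Fin m → ℤ, discPt m p j ∈ Jset L p μL → lamStar ≤ lamVal L p μL j := by
  obtain ⟨φ, hφ⟩ := exists_param L hrank
  obtain ⟨K, hK, hbox⟩ := good_uniform L φ hφ
  have hK' : (0 : ℝ) < K := by exact_mod_cast hK
  have hS := measure_S_pos L φ hφ μL
  have hSr : 0 < (μL (Sset L φ hφ 1)).toReal := ENNReal.toReal_pos hS.ne' (measure_ne_top _ _)
  refine ⟨(μL (Sset L φ hφ 1)).toReal / (K : ℝ) ^ (m - r), by positivity, 1, ?_⟩
  intro p hp j hj
  obtain ⟨v, n, hvn, hv⟩ := exists_good L φ μL hφ p hp j hj.2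
  obtain ⟨t, ht, htc⟩ := hbox v hv
  have h1 := cell_lower L φ hφ μL K p hK hp j v n hvn t ht htc
  have h2 := measure_S_le L φ hφ μL (K * p) (Nat.mul_pos hK hp)
  have h3 := h2.trans (mul_le_mul_right h1 (((K * p : ℕ) : ENNReal) ^ (m - r)))
  have h4 := ENNReal.toReal_mono (ENNReal.mul_ne_top
    (ENNReal.pow_ne_top (ENNReal.natCast_ne_top _)) (measure_ne_top _ _)) h3
  rw [ENNReal.toReal_mul, ENNReal.toReal_pow, ENNReal.toReal_natCast] at h4
  rw [lamVal, div_le_iff₀ (by positivity)]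
  refine h4.trans (le_of_eq ?_)
  push_cast
  rw [mul_pow]
  ring
end
end
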